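/- The family of elements T^ε Y₁^{a₁} Y₂^{a₂} X₁^{b₁} X₂^{b₂}, with ε ∈ {0,1} and a₁, a₂, b₁, b₂ ∈ ℤ (negative exponents interpreted via the inverse generators), is a ℂ-vector-space basis of the double affine Hecke algebra H_{t,q}. -/

import Mathlib

noncomputable section

/-- Generators of the double affine Hecke algebra of type GL₂:
`T, T⁻¹, X₁, X₁⁻¹, X₂, X₂⁻¹, Y₁, Y₁⁻¹, Y₂, Y₂⁻¹`. -/
inductive DGen : Type
  | T | Ti | X1 | X1i | X2 | X2i | Y1 | Y1i | Y2 | Y2i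

abbrev FD : Type := FreeAlgebra ℂ DGen

def gD : DGen → FD := FreeAlgebra.ι ℂ

/-- The defining relations of the double affine Hecke algebra `H_{t,q}` of type GL₂. -/
inductive DRel (q t : ℂ) : FD → FD → Prop
  | TTi : DRel q t (gD .T * gD .Ti) 1
  | TiT : DRel q t (gD .Ti * gD .T) 1
  | X1X1i : DRel q t (gD .X1 * gD .X1i) 1
  | X1iX1 : DRel q t (gD .X1i * gD .X1) 1
  | X2X2i : DRel q t (gD .X2 * gD .X2i) 1
  | X2iX2 : DRel q t (gD .X2i * gD .X2) 1
  | Y1Y1i : DRel q t (gD .Y1 * gD .Y1i) 1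
  | Y1iY1 : DRel q t (gD .Y1i * gD .Y1) 1
  | Y2Y2i : DRel q t (gD .Y2 * gD .Y2i) 1
  | Y2iY2 : DRel q t (gD .Y2i * gD .Y2) 1
  | TX1T : DRel q t (gD .T * gD .X1 * gD .T) (gD .X2)
  | TiY1Ti : DRel q t (gD .Ti * gD .Y1 * gD .Ti) (gD .Y2)
  | Xcomm : DRel q t (gD .X1 * gD .X2) (gD .X2 * gD .X1)
  | Ycomm : DRel q t (gD .Y1 * gD .Y2) (gD .Y2 * gD .Y1)
  | YXX : DRel q t (gD .Y1 * (gD .X1 * gD .X2)) ((q ^ 2) • (gD .X1 * gD .X2 * gD .Y1))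
  | X1iY2 : DRel q t (gD .X1i * gD .Y2) (gD .Y2 * gD .X1i * gD .Ti * gD .Ti)
  | hecke : DRel q t ((gD .T + algebraMap ℂ FD t⁻¹) * (gD .T - algebraMap ℂ FD t)) 0

/-- The double affine Hecke algebra `H_{t,q}` of type GL₂. -/
abbrev DAHA (q t : ℂ) : Type := RingQuot (DRel q t)

variable (q t : ℂ)

def T : DAHA q t := RingQuot.mkAlgHom ℂ (DRel q t) (gD .T)
def Ti : DAHA q t := RingQuot.mkAlgHom ℂ (DRel q t) (gD .Ti)
def X1 : DAHA q t := RingQuot.mkAlgHom ℂ (DRel q t) (gD .X1)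
def X1i : DAHA q t := RingQuot.mkAlgHom ℂ (DRel q t) (gD .X1i)
def X2 : DAHA q t := RingQuot.mkAlgHom ℂ (DRel q t) (gD .X2)
def X2i : DAHA q t := RingQuot.mkAlgHom ℂ (DRel q t) (gD .X2i)
def Y1 : DAHA q t := RingQuot.mkAlgHom ℂ (DRel q t) (gD .Y1)
def Y1i : DAHA q t := RingQuot.mkAlgHom ℂ (DRel q t) (gD .Y1i)
def Y2 : DAHA q t := RingQuot.mkAlgHom ℂ (DRel q t) (gD .Y2)
def Y2i : DAHA q t := RingQuot.mkAlgHom ℂ (DRel q t) (gD .Y2i)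

/-- Integer powers of an element `x` with designated inverse `xi`:
negative exponents are interpreted via the inverse generator. -/
def zp {M : Type*} [Monoid M] (x xi : M) : ℤ → M
  | Int.ofNat n => x ^ n
  | Int.negSucc n => xi ^ (n + 1)

/-- The PBW family `T^ε Y₁^{a₁} Y₂^{a₂} X₁^{b₁} X₂^{b₂}` of the DAHA,
indexed by `ε ∈ {0,1}` and `a₁, a₂, b₁, b₂ ∈ ℤ`. -/
def pbwDAHA (q t : ℂ) : Fin 2 × ℤ × ℤ × ℤ × ℤ → DAHA q t :=
  fun x => T q t ^ (x.1 : ℕ) * zp (Y1 q t) (Y1i q t) x.2.1 * zp (Y2 q t) (Y2i q t) x.2.2.1 *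
    zp (X1 q t) (X1i q t) x.2.2.2.1 * zp (X2 q t) (X2i q t) x.2.2.2.2

/-!
Put `π = Y₂ T`, so that `Y₁ = T π` and `Y₂ = π T⁻¹`. The defining relations then say that `X₁, X₂`
satisfy the affine Hecke relations with `T`, are permuted up to scalars by `π`, and that `π²`
commutes with `T`; the last condition says that `Y₂, Y₁` satisfy the affine Hecke relations with
`T` as well.

Spanning: the `X`s can be moved to the right of `T`, `π` and `π⁻¹`, and then the `Y`s to the right
of `T`.

Independence: it suffices to find one algebra with elements `τ, π, x, y` that satisfy the relations
and have independent PBW monomials. Let `x, y`, the swap `s`, its Demazure operator `Δ` and the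
shift `ρ : x ↦ y ↦ p⁻¹ x` act from the right on the rational functions in `x, y`. If
`τ² = 1 + c τ` and `π²` commutes with `τ`, then the Demazure–Lusztig element `τ ⊗ s + c 1 ⊗ Δ`,
together with `π ⊗ ρ`, `1 ⊗ x` and `1 ⊗ y`, satisfies the double affine relations. Since `s` and `ρ`
fix `1` and `Δ` kills it, evaluating the right operators at `1` turns a word in the first two
elements followed by `1 ⊗ xᵐ yⁿ` into the same word in `τ, π` tensored with `xᵐ yⁿ`. Hence
independence passes from `1, τ` to the affine monomials, and then, with `π = x τ` in the resulting
affine Hecke algebra, to the double affine ones.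
-/

universe u v

section Subalgebras

variable {R A : Type*} [CommSemiring R] [Semiring A] [Algebra R A]

open Algebra Subalgebra

theorem toSubmodule_adjoin_mul_le {G : Set A} {N : Submodule R A}
    (h : ∀ g ∈ G, ∀ n ∈ N, g * n ∈ N * toSubmodule (adjoin R G)) :
    toSubmodule (adjoin R G) * N ≤ N * toSubmodule (adjoin R G) := by
  set B := adjoin R G
  have absorb : N * toSubmodule B * toSubmodule B = N * toSubmodule B := by
    rw [mul_assoc, B.isIdempotentElem_toSubmodule.eq]
  rw [Submodule.mul_le]
  intro b hb
  induction hb using adjoin_induction with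
  | mem g hg => exact h g hg
  | algebraMap r =>
    intro n hn
    rw [commutes]
    exact Submodule.mul_mem_mul hn (B.algebraMap_mem r)
  | add b₁ b₂ _ _ ih₁ ih₂ =>
    intro n hn
    rw [add_mul]
    exact add_mem (ih₁ n hn) (ih₂ n hn)
  | mul b₁ b₂ _ _ ih₁ ih₂ =>
    intro n hn
    have left_le : ∀ z ∈ N * toSubmodule B, b₁ * z ∈ N * toSubmodule B := by
      intro z hz
      refine Submodule.mul_induction_on hz (fun m hm b hb => ?_) (fun z w hz hw => ?_)
      · rw [← mul_assoc, ← absorb]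
        exact Submodule.mul_mem_mul (ih₁ m hm) hb
      · rw [mul_add]
        exact add_mem hz hw
    rw [mul_assoc]
    exact left_le _ (ih₂ n hn)

theorem mul_toSubmodule_adjoin_le {B : Subalgebra R A} {N : Submodule R A}
    (h : toSubmodule B * N ≤ N * toSubmodule B) :
    toSubmodule B * toSubmodule (adjoin R (N : Set A)) ≤
      toSubmodule (adjoin R (N : Set A)) * toSubmodule B := by
  set C := adjoin R (N : Set A)
  have hNC : N ≤ toSubmodule C := subset_adjoin
  rw [Submodule.mul_le]
  intro b hb c hc
  induction hc using adjoin_induction generalizing b with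
  | mem n hn => exact mul_le_mul_left hNC _ (h (Submodule.mul_mem_mul hb hn))
  | algebraMap r =>
    rw [← commutes]
    exact Submodule.mul_mem_mul (C.algebraMap_mem r) hb
  | add c₁ c₂ _ _ ih₁ ih₂ =>
    rw [mul_add]
    exact add_mem (ih₁ b hb) (ih₂ b hb)
  | mul c₁ c₂ _ _ ih₁ ih₂ =>
    rw [← mul_assoc]
    refine Submodule.mul_induction_on (ih₁ b hb) (fun c hc b' hb' => ?_) (fun z w hz hw => ?_)
    · rw [mul_assoc, ← C.isIdempotentElem_toSubmodule.eq, mul_assoc]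
      exact Submodule.mul_mem_mul hc (ih₂ b' hb')
    · rw [add_mul]
      exact add_mem hz hw

theorem adjoin_mul_adjoin_le {G H : Set A}
    (h : ∀ g ∈ G, ∀ b ∈ H, g * b ∈ Submodule.span R (insert 1 H) * toSubmodule (adjoin R G)) :
    toSubmodule (adjoin R G) * toSubmodule (adjoin R H) ≤
      toSubmodule (adjoin R H) * toSubmodule (adjoin R G) := by
  rw [← adjoin_insert_one R H, ← adjoin_span (R := R) (s := insert 1 H)]
  refine mul_toSubmodule_adjoin_le (toSubmodule_adjoin_mul_le fun g hg n hn => ?_)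
  induction hn using Submodule.span_induction with
  | mem b hb =>
    obtain rfl | hb := hb
    · rw [mul_one, ← one_mul g]
      exact Submodule.mul_mem_mul (Submodule.subset_span (Set.mem_insert _ _))
        (subset_adjoin hg)
    · exact h g hg b hb
  | zero => simp
  | add m n _ _ ihm ihn =>
    rw [mul_add]
    exact add_mem ihm ihn
  | smul r n _ ih =>
    rw [mul_smul_comm]
    exact Submodule.smul_mem _ r ih

theorem sup_toSubmodule_le_mul {B C : Subalgebra R A}
    (h : toSubmodule B * toSubmodule C ≤ toSubmodule C * toSubmodule B) :
    toSubmodule (C ⊔ B) ≤ toSubmodule C * toSubmodule B := by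
  have mul_closed : toSubmodule C * toSubmodule B * (toSubmodule C * toSubmodule B) ≤
      toSubmodule C * toSubmodule B := by
    calc toSubmodule C * toSubmodule B * (toSubmodule C * toSubmodule B)
        = toSubmodule C * (toSubmodule B * toSubmodule C) * toSubmodule B := by
          simp only [mul_assoc]
      _ ≤ toSubmodule C * (toSubmodule C * toSubmodule B) * toSubmodule B := by gcongr
      _ = toSubmodule C * toSubmodule B := by
          rw [← mul_assoc, C.isIdempotentElem_toSubmodule.eq, mul_assoc,
            B.isIdempotentElem_toSubmodule.eq]
  have mem_product {c b : A} (hc : c ∈ C) (hb : b ∈ B) :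
      c * b ∈ toSubmodule C * toSubmodule B := Submodule.mul_mem_mul hc hb
  let S : Subalgebra R A := (toSubmodule C * toSubmodule B).toSubalgebra
    (by simpa using mem_product C.one_mem B.one_mem)
    fun z w hz hw => mul_closed (Submodule.mul_mem_mul hz hw)
  have le_S : C ⊔ B ≤ S :=
    sup_le (fun c hc => by simpa using! mem_product hc B.one_mem)
      fun b hb => by simpa using! mem_product C.one_mem hb
  exact le_S

end Subalgebras

section Relations

variable {k A : Type*} [CommRing k] [Ring A] [Algebra k A]

/-- The affine Hecke algebra relations of type `GL₂`, for a Hecke generator `τ` with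
`τ² = 1 + c τ` and lattice generators `x, y`. -/
structure IsAffineHecke (c : k) (τ x y : Aˣ) : Prop where
  quadratic : (τ * τ : A) = 1 + c • (τ : A)
  braid : τ * x * τ = y
  comm : Commute x y

/-- The double affine Hecke algebra relations of type `GL₂` in the generators `τ, π, x, y`. -/
structure IsDoubleAffineHecke (c : k) (p : kˣ) (τ π x y : Aˣ) : Prop
    extends IsAffineHecke c τ x y where
  pi_mul_right : SemiconjBy π y x
  pi_mul_left : SemiconjBy π x (p • y)
  pi_sq : Commute (π * π) τ

theorem val_inv_of_quadratic {c : k} {τ : Aˣ} (h : (τ * τ : A) = 1 + c • (τ : A)) :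
    (↑τ⁻¹ : A) = τ - c • 1 :=
  Units.inv_eq_of_mul_eq_one_right (by rw [mul_sub, h]; simp)

theorem toSubmodule_adjoin_singleton_le_of_quadratic {c : k} {a : A} (h : a * a = 1 + c • a) :
    Subalgebra.toSubmodule (Algebra.adjoin k {a}) ≤
      Submodule.span k (Set.range fun i : Fin 2 => a ^ (i : ℕ)) := by
  have range_eq : (Set.range fun i : Fin 2 => a ^ (i : ℕ)) = {1, a} := by
    ext; simp [Fin.exists_fin_two, eq_comm]
  rw [range_eq]
  intro z hz
  change z ∈ Algebra.adjoin k {a} at hz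
  induction hz using Algebra.adjoin_induction with
  | mem z hz => exact Submodule.subset_span (Or.inr hz)
  | algebraMap r => exact Submodule.mem_span_pair.2 ⟨r, 0, by simp [Algebra.smul_def]⟩
  | add z w _ _ hz hw => exact add_mem hz hw
  | mul z w _ _ hz hw =>
    obtain ⟨r, s, rfl⟩ := Submodule.mem_span_pair.1 hz
    obtain ⟨u, v, rfl⟩ := Submodule.mem_span_pair.1 hw
    refine Submodule.mem_span_pair.2 ⟨r * u + s * v, r * v + s * u + s * v * c, ?_⟩
    simp only [add_mul, mul_add, smul_mul_smul_comm, one_mul, mul_one, h]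
    module

/-- The generators `x, x⁻¹, y, y⁻¹` of the Laurent polynomials in two units. -/
def laurentGenerators (x y : Aˣ) : Set A :=
  {(x : A), (↑x⁻¹ : A), (y : A), (↑y⁻¹ : A)}

variable (k) in
/-- The subalgebra of Laurent polynomials in two units. -/
def laurentSubalgebra (x y : Aˣ) : Subalgebra k A :=
  Algebra.adjoin k (laurentGenerators x y)

theorem mem_laurentSubalgebra {x y : Aˣ} {a : A} (ha : a ∈ laurentGenerators x y) :
    a ∈ laurentSubalgebra k x y :=
  Algebra.subset_adjoin ha

theorem toSubmodule_laurentSubalgebra_le {x y : Aˣ} (h : Commute x y) :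
    Subalgebra.toSubmodule (laurentSubalgebra k x y) ≤
      Submodule.span k (Set.range fun m : ℤ × ℤ => ((x ^ m.1 * y ^ m.2 : Aˣ) : A)) := by
  rw [laurentSubalgebra, Algebra.adjoin_eq_span]
  refine Submodule.span_mono fun a ha => ?_
  induction ha using Submonoid.closure_induction with
  | mem a ha =>
    rcases ha with rfl | rfl | rfl | rfl
    · exact ⟨(1, 0), by simp⟩
    · exact ⟨(-1, 0), by simp⟩
    · exact ⟨(0, 1), by simp⟩
    · exact ⟨(0, -1), by simp⟩
  | one => exact ⟨0, by simp⟩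
  | mul a b _ _ iha ihb =>
    obtain ⟨m, rfl⟩ := iha
    obtain ⟨n, rfl⟩ := ihb
    refine ⟨m + n, ?_⟩
    simp only [Prod.fst_add, Prod.snd_add, zpow_add, ← Units.val_mul]
    rw [mul_assoc, mul_assoc, ← mul_assoc (x ^ n.1), ← mul_assoc (y ^ m.2),
      (h.zpow_zpow n.1 m.2).eq]

namespace IsAffineHecke

variable {c : k} {τ x y : Aˣ}

theorem inv (h : IsAffineHecke c τ x y) : IsAffineHecke c τ y⁻¹ x⁻¹ where
  quadratic := h.quadratic
  braid := by rw [← h.braid]; group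
  comm := h.comm.inv_inv.symm

theorem x_mul_tau (h : IsAffineHecke c τ x y) : (x * τ : A) = (τ - c • 1) * y := by
  rw [← val_inv_of_quadratic h.quadratic, ← h.braid]
  simp [mul_assoc]

theorem y_mul_tau (h : IsAffineHecke c τ x y) : (y * τ : A) = τ * x + c • (y : A) := by
  have y_mul_inv : (y * ↑τ⁻¹ : A) = τ * x := by simp [← h.braid]
  rw [val_inv_of_quadratic h.quadratic, mul_sub, sub_eq_iff_eq_add, mul_smul_comm,
    mul_one] at y_mul_inv
  exact y_mul_inv

theorem mul_tau_mem (h : IsAffineHecke c τ x y) {g : A} (hg : g ∈ laurentGenerators x y) :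
    g * τ ∈ Submodule.span k {1, (τ : A)} * (laurentSubalgebra k x y).toSubmodule := by
  have one_mem : (1 : A) ∈ Submodule.span k {1, (τ : A)} := Submodule.subset_span (by simp)
  have tau_mem : (τ : A) ∈ Submodule.span k {1, (τ : A)} := Submodule.subset_span (by simp)
  have x_case {z w : Aˣ} (hw : (w : A) ∈ laurentGenerators x y) (h' : IsAffineHecke c τ z w) :
      (z * τ : A) ∈ Submodule.span k {1, (τ : A)} * (laurentSubalgebra k x y).toSubmodule := by
    rw [h'.x_mul_tau]
    exact Submodule.mul_mem_mul (sub_mem tau_mem (Submodule.smul_mem _ c one_mem))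
      (mem_laurentSubalgebra hw)
  have y_case {z w : Aˣ} (hz : (z : A) ∈ laurentGenerators x y)
      (hw : (w : A) ∈ laurentGenerators x y) (h' : IsAffineHecke c τ z w) :
      (w * τ : A) ∈ Submodule.span k {1, (τ : A)} * (laurentSubalgebra k x y).toSubmodule := by
    rw [h'.y_mul_tau, ← one_mul (w : A), ← smul_mul_assoc]
    exact add_mem (Submodule.mul_mem_mul tau_mem (mem_laurentSubalgebra hz))
      (Submodule.mul_mem_mul (Submodule.smul_mem _ c one_mem) (mem_laurentSubalgebra hw))
  rcases hg with rfl | rfl | rfl | rfl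
  · exact x_case (by simp [laurentGenerators]) h
  · exact y_case (by simp [laurentGenerators]) (by simp [laurentGenerators]) h.inv
  · exact y_case (by simp [laurentGenerators]) (by simp [laurentGenerators]) h
  · exact x_case (by simp [laurentGenerators]) h.inv

end IsAffineHecke

/-- The PBW monomials of an affine Hecke algebra with Hecke generator `τ` and lattice generators
`x, y`. -/
def affineMonomial {G : Type*} [Group G] (τ x y : G) (i : Fin 2 × ℤ × ℤ) : G :=
  τ ^ (i.1 : ℕ) * x ^ i.2.1 * y ^ i.2.2

/-- The PBW monomials of a double affine Hecke algebra in the generators `τ, π, x, y`: here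
`τ π` and `π τ⁻¹` are the Dunkl–Cherednik elements `Y₁` and `Y₂`. -/
def pbwMonomial {G : Type*} [Group G] (τ π x y : G) (i : Fin 2 × ℤ × ℤ × ℤ × ℤ) : G :=
  affineMonomial τ (τ * π) (π * τ⁻¹) (i.1, i.2.1, i.2.2.1) * x ^ i.2.2.2.1 * y ^ i.2.2.2.2

theorem commute_mul_inv_iff {G : Type*} [Group G] {τ π : G} :
    Commute (τ * π) (π * τ⁻¹) ↔ Commute (π * π) τ := by
  have lhs_eq : τ * π * (π * τ⁻¹) = τ * (π * π) * τ⁻¹ := by group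
  have rhs_eq : π * τ⁻¹ * (τ * π) = π * π := by group
  rw [commute_iff_eq, commute_iff_eq, lhs_eq, rhs_eq, mul_inv_eq_iff_eq_mul, eq_comm]

namespace IsDoubleAffineHecke

variable {c : k} {p : kˣ} {τ π x y : Aˣ}

theorem dual (h : IsDoubleAffineHecke c p τ π x y) :
    IsAffineHecke c τ (π * τ⁻¹) (τ * π) where
  quadratic := h.quadratic
  braid := by group
  comm := (commute_mul_inv_iff.2 h.pi_sq).symm

theorem pi_mul_smul_left (h : IsDoubleAffineHecke c p τ π x y) : SemiconjBy π (p⁻¹ • x) y := by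
  have pi_mul_x : (π * x : A) = (p : k) • (y * π : A) := by
    simpa [Units.smul_def] using congrArg Units.val h.pi_mul_left.eq
  refine Units.ext ?_
  simp [Units.smul_def, pi_mul_x, smul_smul]

theorem mul_generator_mem (h : IsDoubleAffineHecke c p τ π x y) {g b : A}
    (hg : g ∈ laurentGenerators x y) (hb : b ∈ ({(τ : A), (π : A), (↑π⁻¹ : A)} : Set A)) :
    g * b ∈ Submodule.span k (insert 1 {(τ : A), (π : A), (↑π⁻¹ : A)}) *
      (laurentSubalgebra k x y).toSubmodule := by
  set B : Set A := {(τ : A), (π : A), (↑π⁻¹ : A)}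
  set L := laurentSubalgebra k x y
  have swap_mem {u z w : Aˣ} (r : kˣ) (hu : (u : A) ∈ B) (hz : (z : A) ∈ laurentGenerators x y)
      (hz' : (↑z⁻¹ : A) ∈ laurentGenerators x y) (huz : SemiconjBy u (r • z) w) :
      (w * u : A) ∈ Submodule.span k (insert 1 B) * L.toSubmodule ∧
        (↑w⁻¹ * u : A) ∈ Submodule.span k (insert 1 B) * L.toSubmodule := by
    have hu' := Submodule.subset_span (R := k) (Set.mem_insert_of_mem 1 hu)
    rw [← Units.val_mul, ← Units.val_mul, ← huz.eq, ← huz.inv_right.eq, Units.smul_inv]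
    exact ⟨Submodule.mul_mem_mul hu' (L.smul_mem (mem_laurentSubalgebra hz) (r : k)),
      Submodule.mul_mem_mul hu' (L.smul_mem (mem_laurentSubalgebra hz') (↑r⁻¹ : k))⟩
  have x_mul_pi := swap_mem (z := y) (w := x) 1 (u := π) (by grind) (by grind [laurentGenerators])
    (by grind [laurentGenerators]) (by simpa using h.pi_mul_right)
  have y_mul_pi := swap_mem p⁻¹ (u := π) (by grind) (by grind [laurentGenerators])
    (by grind [laurentGenerators]) h.pi_mul_smul_left
  have x_mul_pi_inv := swap_mem p (u := π⁻¹) (by grind) (by grind [laurentGenerators])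
    (by grind [laurentGenerators]) h.pi_mul_left.inv_symm_left
  have y_mul_pi_inv := swap_mem (z := x) (w := y) 1 (u := π⁻¹) (by grind)
    (by grind [laurentGenerators]) (by grind [laurentGenerators])
    (by simpa using h.pi_mul_right.inv_symm_left)
  rcases hb with rfl | rfl | rfl
  · refine mul_le_mul_left (Submodule.span_mono ?_) _ (h.mul_tau_mem hg)
    grind
  · rcases hg with rfl | rfl | rfl | rfl
    exacts [x_mul_pi.1, x_mul_pi.2, y_mul_pi.1, y_mul_pi.2]
  · rcases hg with rfl | rfl | rfl | rfl
    exacts [x_mul_pi_inv.1, x_mul_pi_inv.2, y_mul_pi_inv.1, y_mul_pi_inv.2]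

theorem adjoin_tau_pi_le (h : IsDoubleAffineHecke c p τ π x y) :
    (Algebra.adjoin k {(τ : A), (π : A), (↑π⁻¹ : A)}).toSubmodule ≤
      (Algebra.adjoin k {(τ : A)}).toSubmodule *
        (laurentSubalgebra k (π * τ⁻¹) (τ * π)).toSubmodule := by
  set L := laurentSubalgebra k (π * τ⁻¹) (τ * π)
  have tau_mem : (τ : A) ∈ Algebra.adjoin k {(τ : A)} ⊔ L :=
    (le_sup_left : _ ≤ Algebra.adjoin k {(τ : A)} ⊔ L) (Algebra.self_mem_adjoin_singleton k _)
  have laurent_mem {u : Aˣ} (hu : (u : A) ∈ laurentGenerators (π * τ⁻¹) (τ * π)) :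
      (u : A) ∈ Algebra.adjoin k {(τ : A)} ⊔ L :=
    (le_sup_right : L ≤ _) (mem_laurentSubalgebra hu)
  have adjoin_le : Algebra.adjoin k {(τ : A), (π : A), (↑π⁻¹ : A)} ≤
      Algebra.adjoin k {(τ : A)} ⊔ L := by
    refine Algebra.adjoin_le ?_
    rintro _ (rfl | rfl | rfl)
    · exact tau_mem
    · simpa using mul_mem (laurent_mem (u := π * τ⁻¹) (by simp [laurentGenerators])) tau_mem
    · simpa using mul_mem (laurent_mem (u := (τ * π)⁻¹) (by simp [laurentGenerators])) tau_mem
  refine le_trans adjoin_le (sup_toSubmodule_le_mul (adjoin_mul_adjoin_le fun g hg b hb => ?_))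
  rw [Set.mem_singleton_iff.1 hb]
  exact h.dual.mul_tau_mem hg

theorem adjoin_le_span_pbwMonomial (h : IsDoubleAffineHecke c p τ π x y) :
    (Algebra.adjoin k {(τ : A), (π : A), (↑π⁻¹ : A)} ⊔ laurentSubalgebra k x y).toSubmodule ≤
      Submodule.span k (Set.range fun i => (pbwMonomial τ π x y i).val) := by
  calc (Algebra.adjoin k {(τ : A), (π : A), (↑π⁻¹ : A)} ⊔ laurentSubalgebra k x y).toSubmodule
      ≤ (Algebra.adjoin k {(τ : A), (π : A), (↑π⁻¹ : A)}).toSubmodule *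
          (laurentSubalgebra k x y).toSubmodule :=
        sup_toSubmodule_le_mul (adjoin_mul_adjoin_le fun g hg b hb => h.mul_generator_mem hg hb)
    _ ≤ (Algebra.adjoin k {(τ : A)}).toSubmodule *
          (laurentSubalgebra k (π * τ⁻¹) (τ * π)).toSubmodule *
          (laurentSubalgebra k x y).toSubmodule := by
        gcongr
        exact h.adjoin_tau_pi_le
    _ ≤ Submodule.span k (Set.range fun i : Fin 2 => (τ : A) ^ (i : ℕ)) *
          Submodule.span k (Set.range fun m : ℤ × ℤ =>
            (((π * τ⁻¹) ^ m.1 * (τ * π) ^ m.2 : Aˣ) : A)) *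
          Submodule.span k (Set.range fun m : ℤ × ℤ => ((x ^ m.1 * y ^ m.2 : Aˣ) : A)) := by
        gcongr
        exacts [toSubmodule_adjoin_singleton_le_of_quadratic h.quadratic,
          toSubmodule_laurentSubalgebra_le h.dual.comm, toSubmodule_laurentSubalgebra_le h.comm]
    _ ≤ _ := by
        rw [Submodule.span_mul_span, Submodule.span_mul_span]
        refine Submodule.span_mono ?_
        rintro _ ⟨_, ⟨_, ⟨ε, rfl⟩, _, ⟨m, rfl⟩, rfl⟩, _, ⟨n, rfl⟩, rfl⟩
        refine ⟨(ε, m.2, m.1, n), ?_⟩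
        simp only [pbwMonomial, affineMonomial, ← Units.val_mul, ← Units.val_pow_eq_pow_val,
          mul_assoc, (h.dual.comm.zpow_zpow m.1 m.2).eq]

end IsDoubleAffineHecke

end Relations

section HeckeLift

open TensorProduct

variable {k A R : Type*} [CommRing k] [Ring A] [Algebra k A] [Ring R] [Algebra k R]

/-- The relations between a reflection `s`, its Demazure operator `Δ`, a `p`-shift `ρ` and
commuting multiplication operators `x, y`, all acting from the right. -/
structure IsDemazureSystem (p : kˣ) (s Δ : R) (ρ x y : Rˣ) : Prop where
  refl_sq : s * s = 1
  demazure_sq : Δ * Δ = Δ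
  anticomm : s * Δ + Δ * s = s - 1
  mul_refl : x * s = s * y
  mul_demazure : x * Δ = Δ * y - y
  comm : Commute x y
  shift_mul_right : SemiconjBy ρ y x
  shift_mul_left : SemiconjBy ρ x (p • y)
  shift_sq_refl : Commute (ρ * ρ : R) s
  shift_sq_demazure : Commute (ρ * ρ : R) Δ

/-- The unit defined by a solution of the quadratic Hecke relation. -/
@[simps]
def unitOfQuadratic {c : k} {a : A} (h : a * a = 1 + c • a) : Aˣ where
  val := a
  inv := a - c • 1
  val_inv := by simp [mul_sub, h]
  inv_val := by simp [sub_mul, h]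

/-- The Demazure–Lusztig element `τ ⊗ s + c ⊗ Δ`, which lifts a Hecke generator `τ` along the
operators `s, Δ`. -/
def heckeLift (c : k) (τ : A) (s Δ : R) : A ⊗[k] R :=
  τ ⊗ₜ s + c • 1 ⊗ₜ Δ

/-- The embedding of the units of `A` into those of `A ⊗ R`. -/
abbrev leftUnit (R : Type*) [Ring R] [Algebra k R] (a : Aˣ) : (A ⊗[k] R)ˣ :=
  Units.map (Algebra.TensorProduct.includeLeft : A →ₐ[k] A ⊗[k] R) a

/-- The embedding of the units of `R` into those of `A ⊗ R`. -/
abbrev rightUnit (A : Type*) [Ring A] [Algebra k A] (r : Rˣ) : (A ⊗[k] R)ˣ :=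
  Units.map (Algebra.TensorProduct.includeRight : R →ₐ[k] A ⊗[k] R) r

namespace IsDemazureSystem

variable {c : k} {p : kˣ} {τ : A} {s Δ : R} {ρ x y : Rˣ}

theorem heckeLift_mul_self (h : IsDemazureSystem p s Δ ρ x y) (hτ : τ * τ = 1 + c • τ) :
    heckeLift c τ s Δ * heckeLift c τ s Δ = 1 + c • heckeLift c τ s Δ := by
  have anticomm : τ ⊗ₜ[k] (s * Δ) + τ ⊗ₜ[k] (Δ * s) = τ ⊗ₜ s - τ ⊗ₜ 1 := by
    rw [← tmul_add, h.anticomm, tmul_sub]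
  calc heckeLift c τ s Δ * heckeLift c τ s Δ
      = (τ * τ) ⊗ₜ[k] (s * s) + c • (τ ⊗ₜ[k] (s * Δ) + τ ⊗ₜ[k] (Δ * s)) +
          c • c • 1 ⊗ₜ[k] (Δ * Δ) := by
        simp only [heckeLift, add_mul, mul_add, Algebra.TensorProduct.tmul_mul_tmul,
          mul_smul_comm, smul_mul_assoc, one_mul, mul_one]
        module
    _ = 1 + c • heckeLift c τ s Δ := by
        rw [anticomm, hτ, h.refl_sq, h.demazure_sq, add_tmul, ← smul_tmul', heckeLift,
          Algebra.TensorProduct.one_def]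
        module

/-- The Demazure–Lusztig element as a unit. -/
def heckeUnit (h : IsDemazureSystem p s Δ ρ x y) (hτ : τ * τ = 1 + c • τ) : (A ⊗[k] R)ˣ :=
  unitOfQuadratic (h.heckeLift_mul_self hτ)

theorem isAffineHecke (h : IsDemazureSystem p s Δ ρ x y) (hτ : τ * τ = 1 + c • τ) :
    IsAffineHecke c (h.heckeUnit hτ) (rightUnit A x) (rightUnit A y) where
  quadratic := h.heckeLift_mul_self hτ
  braid := by
    have x_mul_lift : rightUnit A x * h.heckeUnit hτ = (h.heckeUnit hτ)⁻¹ * rightUnit A y := by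
      refine Units.ext ?_
      change (1 : A) ⊗ₜ[k] (x : R) * heckeLift c τ s Δ =
        (heckeLift c τ s Δ - c • 1) * (1 : A) ⊗ₜ[k] (y : R)
      simp only [heckeLift, mul_add, sub_mul, add_mul, Algebra.TensorProduct.tmul_mul_tmul,
        mul_smul_comm, smul_mul_assoc, one_mul, mul_one, h.mul_refl, h.mul_demazure, tmul_sub]
      module
    rw [mul_assoc, x_mul_lift, mul_inv_cancel_left]
  comm := h.comm.map (Units.map _)

theorem isDoubleAffineHecke (h : IsDemazureSystem p s Δ ρ x y) (hτ : τ * τ = 1 + c • τ) {π : Aˣ}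
    (hπ : Commute (π * π : A) τ) :
    IsDoubleAffineHecke c p (h.heckeUnit hτ) (leftUnit R π * rightUnit A ρ)
      (rightUnit A x) (rightUnit A y) where
  toIsAffineHecke := h.isAffineHecke hτ
  pi_mul_right := by
    refine Units.ext ?_
    simpa using congrArg ((π : A) ⊗ₜ[k] ·) (congrArg Units.val h.shift_mul_right.eq)
  pi_mul_left := by
    refine Units.ext ?_
    simpa [Units.smul_def] using
      congrArg ((π : A) ⊗ₜ[k] ·) (congrArg Units.val h.shift_mul_left.eq)
  pi_sq := by
    have hs := h.shift_sq_refl.eq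
    have hΔ := h.shift_sq_demazure.eq
    refine Units.ext ?_
    change π.val ⊗ₜ[k] 1 * 1 ⊗ₜ[k] ρ.val * (π.val ⊗ₜ[k] 1 * 1 ⊗ₜ[k] ρ.val) * heckeLift c τ s Δ =
      heckeLift c τ s Δ * (π.val ⊗ₜ[k] 1 * 1 ⊗ₜ[k] ρ.val * (π.val ⊗ₜ[k] 1 * 1 ⊗ₜ[k] ρ.val))
    simp only [heckeLift, mul_add, add_mul, Algebra.TensorProduct.tmul_mul_tmul,
      mul_smul_comm, smul_mul_assoc, one_mul, mul_one, hs, hΔ, hπ.eq]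

end IsDemazureSystem

end HeckeLift

section Vacuum

open TensorProduct

/-- The pairs of units whose actions on `B` (by left multiplication) and on `W` are intertwined by
`v`. -/
def intertwinedUnits {B A W : Type*} [Ring B] [Ring A] [AddCommGroup W] [Module A W]
    (v : B → W) : Subgroup (Bˣ × Aˣ) where
  carrier := {u | ∀ b, v (u.1 * b) = (u.2 : A) • v b}
  one_mem' := by simp
  mul_mem' := by
    intro u w hu hw b
    simp only [Prod.fst_mul, Prod.snd_mul, Units.val_mul, mul_assoc, mul_smul, ← hw b]
    exact hu _
  inv_mem' := by
    intro u hu b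
    have h := hu (↑u.1⁻¹ * b)
    rw [Units.mul_inv_cancel_left] at h
    simp [h, smul_smul]

variable {k A R V : Type*} [CommRing k] [Ring A] [Algebra k A] [Ring R]
  [Algebra k R] [AddCommGroup V] [Module k V]

/-- A vacuum functional for right operators: evaluation at a vector fixed by the reflection `s`
and the shift `ρ` and killed by the Demazure operator `Δ`. -/
structure IsVacuum (ε : R →ₗ[k] V) (s Δ : R) (ρ : Rˣ) : Prop where
  refl_mul (r : R) : ε (s * r) = ε r
  demazure_mul (r : R) : ε (Δ * r) = 0
  shift_mul (r : R) : ε (ρ * r) = ε r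

variable {c : k} {p : kˣ} {s Δ : R} {ρ x y : Rˣ} {ε : R →ₗ[k] V}

theorem IsVacuum.heckeUnit_mem (hε : IsVacuum ε s Δ ρ) (h : IsDemazureSystem p s Δ ρ x y)
    {τ : Aˣ} (hτ : (τ * τ : A) = 1 + c • (τ : A)) :
    (h.heckeUnit hτ, τ) ∈ intertwinedUnits (A := A) (ε.lTensor A) := by
  intro b
  change ε.lTensor A (heckeLift c (τ : A) s Δ * b) = (τ : A) • ε.lTensor A b
  induction b with
  | zero => simp
  | tmul a r =>
    simp [heckeLift, add_mul, hε.refl_mul, hε.demazure_mul, smul_tmul']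
  | add b b' hb hb' => rw [mul_add, map_add, map_add, smul_add, hb, hb']

theorem IsVacuum.shift_mem (hε : IsVacuum ε s Δ ρ) (π : Aˣ) :
    (leftUnit R π * rightUnit A ρ, π) ∈ intertwinedUnits (A := A) (ε.lTensor A) := by
  intro b
  induction b with
  | zero => simp
  | tmul a r => simp [hε.shift_mul, smul_tmul']
  | add b b' hb hb' => rw [mul_add, map_add, map_add, smul_add, hb, hb']

theorem affineMonomial_mem {G H : Type*} [Group G] [Group H] {N : Subgroup (G × H)}
    {τ x y : G} {τ' x' y' : H} (hτ : (τ, τ') ∈ N) (hx : (x, x') ∈ N) (hy : (y, y') ∈ N)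
    (i : Fin 2 × ℤ × ℤ) : (affineMonomial τ x y i, affineMonomial τ' x' y' i) ∈ N :=
  mul_mem (mul_mem (pow_mem hτ (i.1 : ℕ)) (zpow_mem hx i.2.1)) (zpow_mem hy i.2.2)

variable [IsDomain k]

theorem linearIndependent_mul_laurent {ι : Type*} {P : ι → (A ⊗[k] R)ˣ} {u : ι → Aˣ}
    (hP : ∀ i, (P i, u i) ∈ intertwinedUnits (A := A) (ε.lTensor A))
    (hu : LinearIndependent k fun i => (u i : A))
    (hε : LinearIndependent k fun m : ℤ × ℤ => ε ↑(x ^ m.1 * y ^ m.2)) :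
    LinearIndependent k fun i : ι × ℤ × ℤ =>
      ((P i.1 * rightUnit A x ^ i.2.1 * rightUnit A y ^ i.2.2 : (A ⊗[k] R)ˣ) : A ⊗[k] R) := by
  have vacuum_eq : ⇑(ε.lTensor A) ∘ (fun i : ι × ℤ × ℤ =>
      ((P i.1 * rightUnit A x ^ i.2.1 * rightUnit A y ^ i.2.2 : (A ⊗[k] R)ˣ) : A ⊗[k] R)) =
      fun i => (u i.1 : A) ⊗ₜ ε ↑(x ^ i.2.1 * y ^ i.2.2) := by
    ext i
    have laurent_eq : rightUnit (k := k) A x ^ i.2.1 * rightUnit A y ^ i.2.2 =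
        rightUnit A (x ^ i.2.1 * y ^ i.2.2) := by simp
    rw [Function.comp_apply, mul_assoc, laurent_eq]
    exact (hP i.1 (1 ⊗ₜ ↑(x ^ i.2.1 * y ^ i.2.2))).trans (by simp [smul_tmul'])
  have tmul := hu.tmul_of_isDomain hε
  refine LinearIndependent.of_comp (ε.lTensor A) ?_
  rw [vacuum_eq]
  exact tmul

theorem IsVacuum.linearIndependent_affineMonomial (hε : IsVacuum ε s Δ ρ)
    (h : IsDemazureSystem p s Δ ρ x y) {τ : Aˣ} (hτ : (τ * τ : A) = 1 + c • (τ : A))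
    (hu : LinearIndependent k fun i : Fin 2 => (τ : A) ^ (i : ℕ))
    (hxy : LinearIndependent k fun m : ℤ × ℤ => ε ↑(x ^ m.1 * y ^ m.2)) :
    LinearIndependent k fun i =>
      (affineMonomial (h.heckeUnit hτ) (rightUnit A x) (rightUnit A y) i).val := by
  refine linearIndependent_mul_laurent (P := fun i : Fin 2 => h.heckeUnit hτ ^ (i : ℕ))
    (u := fun i => τ ^ (i : ℕ)) (ε := ε) (fun i => ?_) (by simpa using hu) hxy
  simpa only [Prod.pow_mk] using pow_mem (hε.heckeUnit_mem h hτ) (i : ℕ)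

theorem IsVacuum.linearIndependent_pbwMonomial (hε : IsVacuum ε s Δ ρ)
    (h : IsDemazureSystem p s Δ ρ x y) {τ π : Aˣ} (hτ : (τ * τ : A) = 1 + c • (τ : A))
    (hu : LinearIndependent k fun i => (affineMonomial τ (τ * π) (π * τ⁻¹) i).val)
    (hxy : LinearIndependent k fun m : ℤ × ℤ => ε ↑(x ^ m.1 * y ^ m.2)) :
    LinearIndependent k fun i =>
      (pbwMonomial (h.heckeUnit hτ) (leftUnit R π * rightUnit A ρ) (rightUnit A x)
        (rightUnit A y) i).val := by
  have lift_mem := hε.heckeUnit_mem h hτ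
  have shift_mem := hε.shift_mem π
  have tau_pi_mem : (h.heckeUnit hτ * (leftUnit R π * rightUnit A ρ), τ * π) ∈
      intertwinedUnits (A := A) (ε.lTensor A) := mul_mem lift_mem shift_mem
  have pi_tau_inv_mem : (leftUnit R π * rightUnit A ρ * (h.heckeUnit hτ)⁻¹, π * τ⁻¹) ∈
      intertwinedUnits (A := A) (ε.lTensor A) := mul_mem shift_mem (inv_mem lift_mem)
  have lin := linearIndependent_mul_laurent
    (affineMonomial_mem lift_mem tau_pi_mem pi_tau_inv_mem) hu hxy
  have reindexed := lin.comp
    (fun i : Fin 2 × ℤ × ℤ × ℤ × ℤ => ((i.1, i.2.1, i.2.2.1), i.2.2.2)) fun i j hij => by grind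
  exact reindexed

end Vacuum

section Existence

variable {k : Type*} [CommRing k]

theorem IsAffineHecke.commute_sq {A : Type*} [Ring A] [Algebra k A] {c : k} {τ x y : Aˣ}
    (h : IsAffineHecke c τ x y) : Commute (x * τ * (x * τ)) τ := by
  have x_tau_x : x * τ * (x * τ) = τ * x * (τ * x) := by
    simpa only [← h.braid, mul_assoc] using h.comm.eq
  rw [commute_iff_eq]
  calc x * τ * (x * τ) * τ = τ * x * (τ * x) * τ := by rw [x_tau_x]
    _ = τ * (x * τ * (x * τ)) := by simp only [mul_assoc]

theorem exists_quadratic_linearIndependent (c : k) :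
    ∃ τ : (QuadraticAlgebra k 1 c)ˣ, (τ * τ : QuadraticAlgebra k 1 c) = 1 + c • ↑τ ∧
      LinearIndependent k fun i : Fin 2 => (τ : QuadraticAlgebra k 1 c) ^ (i : ℕ) := by
  refine ⟨unitOfQuadratic (c := c) (a := QuadraticAlgebra.omega) ?_, ?_, ?_⟩
  · simp [QuadraticAlgebra.omega_mul_omega_eq_add]
  · simp [QuadraticAlgebra.omega_mul_omega_eq_add]
  · have pair : LinearIndependent k ![(1 : QuadraticAlgebra k 1 c), QuadraticAlgebra.omega] :=
      LinearIndependent.pair_iff.2 fun r s h => by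
        have hr : r = 0 := by simpa [QuadraticAlgebra.re_one] using congrArg QuadraticAlgebra.re h
        have hs : s = 0 := by simpa [hr] using congrArg QuadraticAlgebra.im h
        exact ⟨hr, hs⟩
    convert pair with i
    fin_cases i <;> simp

-- For `π = x τ`, the elements `τ π` and `π τ⁻¹` of `pbwMonomial` are `y` and `x`.
theorem IsAffineHecke.affineMonomial_swap {A : Type*} [Ring A] [Algebra k A] {c : k}
    {τ x y : Aˣ} (h : IsAffineHecke c τ x y) (i : Fin 2 × ℤ × ℤ) :
    affineMonomial τ (τ * (x * τ)) (x * τ * τ⁻¹) i = affineMonomial τ x y (i.1, i.2.2, i.2.1) := by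
  rw [affineMonomial, affineMonomial, mul_inv_cancel_right, ← mul_assoc τ, h.braid, mul_assoc,
    mul_assoc, (h.comm.zpow_zpow i.2.2 i.2.1).eq]

theorem IsVacuum.exists_isDoubleAffineHecke {k : Type u} {R : Type v} {V : Type*} [CommRing k]
    [IsDomain k] [Ring R] [Algebra k R] [AddCommGroup V] [Module k V] {p : kˣ} {s Δ : R}
    {ρ x y : Rˣ} {ε : R →ₗ[k] V} (hε : IsVacuum ε s Δ ρ) (h : IsDemazureSystem p s Δ ρ x y)
    (hxy : LinearIndependent k fun m : ℤ × ℤ => ε ↑(x ^ m.1 * y ^ m.2)) (c : k) :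
    ∃ (A : Type (max u v)) (_ : Ring A) (_ : Algebra k A) (τ π x y : Aˣ),
      IsDoubleAffineHecke c p τ π x y ∧
        LinearIndependent k fun i => (pbwMonomial τ π x y i).val := by
  obtain ⟨τ, hτ, lin_tau⟩ := exists_quadratic_linearIndependent c
  have affine := h.isAffineHecke hτ
  have lin_affine := hε.linearIndependent_affineMonomial h hτ lin_tau hxy
  have lin_swap := lin_affine.comp (fun i : Fin 2 × ℤ × ℤ => (i.1, i.2.2, i.2.1))
    fun i j hij => by grind
  have pi_sq := congrArg Units.val affine.commute_sq.eq
  refine ⟨_, _, _, _, _, _, _, h.isDoubleAffineHecke affine.quadratic pi_sq,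
    hε.linearIndependent_pbwMonomial h affine.quadratic ?_ hxy⟩
  simp only [affine.affineMonomial_swap]
  exact lin_swap

end Existence

section RightOperators

open MulOpposite

variable {k K : Type*} [CommRing k] [Field K] [Algebra k K]

variable (k K) in
/-- Multiplication by a field element as a right operator, that is, as an element of the opposite
of the endomorphism ring. -/
def rightMul : K →ₐ[k] (Module.End k K)ᵐᵒᵖ :=
  (Algebra.lmul k K).toOpposite fun a b => (Commute.all a b).map _

/-- A field automorphism as a right operator. -/
def rightAut (σ : K ≃ₐ[k] K) : (Module.End k K)ᵐᵒᵖˣ :=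
  Units.opEquiv.symm (op (LinearMap.GeneralLinearGroup.ofLinearEquiv σ.toLinearEquiv))

/-- The operator `f ↦ w (σ f - f)`, as a right operator; it is the Demazure operator of an
automorphism `σ` exchanging `x` and `y` when `w = y / (x - y)`. -/
def rightDemazure (σ : K ≃ₐ[k] K) (w : K) : (Module.End k K)ᵐᵒᵖ :=
  ((rightAut σ : (Module.End k K)ᵐᵒᵖ) - 1) * rightMul k K w

variable (k K) in
/-- Evaluation of a right operator at `1`. -/
def evalOne : (Module.End k K)ᵐᵒᵖ →ₗ[k] K :=
  LinearMap.applyₗ (1 : K) ∘ₗ (opLinearEquiv k).symm.toLinearMap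

@[simp]
theorem unop_rightMul_apply (a f : K) : (rightMul k K a).unop f = a * f := rfl

@[simp]
theorem unop_rightAut_apply (σ : K ≃ₐ[k] K) (f : K) : (rightAut σ).val.unop f = σ f := rfl

@[simp]
theorem unop_rightDemazure_apply (σ : K ≃ₐ[k] K) (w f : K) :
    (rightDemazure σ w).unop f = w * (σ f - f) := rfl

theorem rightOperator_ext {r r' : (Module.End k K)ᵐᵒᵖ} (h : ∀ f, r.unop f = r'.unop f) : r = r' :=
  unop_injective (LinearMap.ext h)

theorem evalOne_rightMul_zpow_mul_zpow (x y : Kˣ) (m n : ℤ) :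
    evalOne k K (Units.map (rightMul k K) x ^ m * Units.map (rightMul k K) y ^ n :
      (Module.End k K)ᵐᵒᵖˣ) = (x ^ m * y ^ n : Kˣ) := by
  rw [← map_zpow, ← map_zpow, ← map_mul]
  exact mul_one _

theorem isVacuum_evalOne (σ ρ : K ≃ₐ[k] K) (w : K) :
    IsVacuum (evalOne k K) (rightAut σ).val (rightDemazure σ w) (rightAut ρ) where
  refl_mul r := by simp [evalOne]
  demazure_mul r := by simp [evalOne]
  shift_mul r := by simp [evalOne]

theorem isDemazureSystem_rightDemazure {p : kˣ} {σ ρ : K ≃ₐ[k] K} {x y : Kˣ} {w : K}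
    (hσσ : ∀ f, σ (σ f) = f) (hσx : σ x = y) (hρx : ρ x = y) (hρy : ρ y = (↑p⁻¹ : k) • (x : K))
    (hρσ : ∀ f, ρ (ρ (σ f)) = σ (ρ (ρ f))) (hw : w * (x - y) = y) :
    IsDemazureSystem p (rightAut σ).val (rightDemazure σ w) (rightAut ρ)
      (Units.map (rightMul k K) x) (Units.map (rightMul k K) y) := by
  have sub_ne : (x - y : K) ≠ 0 := right_ne_zero_of_mul (hw ▸ y.ne_zero)
  have hσy : σ y = x := by rw [← hσx, hσσ]
  have refl_weight : σ w = -(w + 1) := by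
    have image_hw := congrArg σ hw
    simp only [map_mul, map_sub, hσx, hσy] at image_hw
    exact mul_right_cancel₀ sub_ne (by linear_combination hw - image_hw)
  have shift_weight : ρ (ρ w) = w := by
    have p_inv_ne : algebraMap k K ↑p⁻¹ ≠ 0 := (p⁻¹.map (algebraMap k K).toMonoidHom).ne_zero
    have image_hw := congrArg (fun f => ρ (ρ f)) hw
    simp only [map_mul, map_sub, hρx, hρy, Algebra.smul_def, AlgEquiv.commutes] at image_hw
    exact mul_right_cancel₀ (mul_ne_zero p_inv_ne sub_ne)
      (by linear_combination image_hw - algebraMap k K ↑p⁻¹ * hw)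
  exact
  { refl_sq := rightOperator_ext fun f => by simp [hσσ]
    demazure_sq := rightOperator_ext fun f => by
      simp only [unop_mul, Module.End.mul_apply, unop_rightDemazure_apply, map_mul, map_sub, hσσ,
        refl_weight]
      ring
    anticomm := rightOperator_ext fun f => by
      simp only [unop_add, unop_sub, unop_mul, unop_one, LinearMap.add_apply, LinearMap.sub_apply,
        Module.End.mul_apply, Module.End.one_apply, unop_rightAut_apply, unop_rightDemazure_apply,
        map_mul, map_sub, hσσ, refl_weight]
      ring
    mul_refl := rightOperator_ext fun f => by simp [hσx]
    mul_demazure := rightOperator_ext fun f => by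
      simp only [unop_sub, unop_mul, LinearMap.sub_apply, Module.End.mul_apply, Units.coe_map,
        MonoidHom.coe_coe, unop_rightMul_apply, unop_rightDemazure_apply, map_mul, hσx]
      linear_combination -f * hw
    comm := (Commute.all x y).map _
    shift_mul_right := Units.ext <| rightOperator_ext fun f => by simp [hρx]
    shift_mul_left := Units.ext <| rightOperator_ext fun f => by
      simp [hρy, Units.smul_def, smul_smul]
    shift_sq_refl := rightOperator_ext fun f => by simp [hρσ]
    shift_sq_demazure := rightOperator_ext fun f => by simp [hρσ, shift_weight] }

end RightOperators

section LaurentField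

/-- Laurent polynomials in two variables. -/
abbrev Laurent (k : Type*) [CommRing k] : Type _ := AddMonoidAlgebra k (ℤ × ℤ)

namespace Laurent

variable {k : Type*} [CommRing k]

variable (k) in
/-- The Laurent monomials, as units. -/
def monomial : Multiplicative (ℤ × ℤ) →* (Laurent k)ˣ :=
  (AddMonoidAlgebra.of k (ℤ × ℤ)).toHomUnits

variable (k) in
/-- The first variable of the Laurent polynomials. -/
def x : (Laurent k)ˣ := monomial k (.ofAdd (1, 0))

variable (k) in
/-- The second variable of the Laurent polynomials. -/
def y : (Laurent k)ˣ := monomial k (.ofAdd (0, 1))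

theorem x_zpow_mul_y_zpow (m : ℤ × ℤ) : x k ^ m.1 * y k ^ m.2 = monomial k (.ofAdd m) := by
  rw [x, y, ← map_zpow (monomial k), ← map_zpow (monomial k), ← map_mul, ← ofAdd_zsmul,
    ← ofAdd_zsmul, ← ofAdd_add]
  simp

theorem algHom_ext {B : Type*} [Ring B] [Algebra k B] {f g : Laurent k →ₐ[k] B}
    (hx : f (x k) = g (x k)) (hy : f (y k) = g (y k)) : f = g := by
  have units_eq (m : ℤ × ℤ) : Units.map (f : Laurent k →* B) (monomial k (.ofAdd m)) =
      Units.map (g : Laurent k →* B) (monomial k (.ofAdd m)) := by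
    have hx' : Units.map (f : Laurent k →* B) (x k) = Units.map (g : Laurent k →* B) (x k) :=
      Units.ext hx
    have hy' : Units.map (f : Laurent k →* B) (y k) = Units.map (g : Laurent k →* B) (y k) :=
      Units.ext hy
    rw [← x_zpow_mul_y_zpow, map_mul, map_mul, map_zpow, map_zpow, map_zpow, map_zpow, hx', hy']
  refine AddMonoidAlgebra.algHom_ext (fun m => congrArg Units.val (units_eq m)) ?_
  ext

theorem linearIndependent_monomial :
    LinearIndependent k fun m : ℤ × ℤ => (monomial k (.ofAdd m)).val :=
  (AddMonoidAlgebra.basis (ℤ × ℤ) k).linearIndependent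

/-- The homomorphism from the Laurent polynomials sending the variables to two given units. -/
def lift {B : Type*} [CommRing B] [Algebra k B] (a b : Bˣ) : Laurent k →ₐ[k] B :=
  AddMonoidAlgebra.lift k B (ℤ × ℤ) ((Units.coeHom B).comp
    (((zpowersHom Bˣ a).coprod (zpowersHom Bˣ b)).comp
      (MulEquiv.prodMultiplicative ℤ ℤ).toMonoidHom))

@[simp]
theorem lift_x {B : Type*} [CommRing B] [Algebra k B] (a b : Bˣ) : lift (k := k) a b (x k) = a := by
  simp [lift, x, monomial]

@[simp]
theorem lift_y {B : Type*} [CommRing B] [Algebra k B] (a b : Bˣ) : lift (k := k) a b (y k) = b := by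
  simp [lift, y, monomial]

/-- The automorphism `x ↦ u y`, `y ↦ v x` of the Laurent polynomials. -/
def twistedSwap (u v : kˣ) : Laurent k ≃ₐ[k] Laurent k :=
  AlgEquiv.ofAlgHom (lift (u • y k) (v • x k)) (lift (v⁻¹ • y k) (u⁻¹ • x k))
    (algHom_ext (by simp [Units.smul_def, smul_smul]) (by simp [Units.smul_def, smul_smul]))
    (algHom_ext (by simp [Units.smul_def, smul_smul]) (by simp [Units.smul_def, smul_smul]))

@[simp]
theorem twistedSwap_x (u v : kˣ) : twistedSwap u v (x k) = (u : k) • (y k : Laurent k) :=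
  lift_x _ _

@[simp]
theorem twistedSwap_y (u v : kˣ) : twistedSwap u v (y k) = (v : k) • (x k : Laurent k) :=
  lift_y _ _

variable (k) in
/-- The units of the field of fractions coming from units of the Laurent polynomials. -/
def toFraction : (Laurent k)ˣ →* (FractionRing (Laurent k))ˣ :=
  Units.map (algebraMap (Laurent k) (FractionRing (Laurent k)))

theorem fraction_algHom_ext {B : Type*} [Ring B] [Algebra k B]
    {f g : FractionRing (Laurent k) →ₐ[k] B} (hx : f (toFraction k (x k)) = g (toFraction k (x k)))
    (hy : f (toFraction k (y k)) = g (toFraction k (y k))) : f = g :=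
  IsLocalization.algHom_ext (nonZeroDivisors (Laurent k)) (algHom_ext hx hy)

theorem linearIndependent_toFraction : LinearIndependent k fun m : ℤ × ℤ =>
    (toFraction k (x k) ^ m.1 * toFraction k (y k) ^ m.2).val := by
  simp only [← map_zpow, ← map_mul, x_zpow_mul_y_zpow]
  refine linearIndependent_monomial.map'
    (IsScalarTower.toAlgHom k (Laurent k) (FractionRing (Laurent k))).toLinearMap ?_
  exact LinearMap.ker_eq_bot.2 (IsFractionRing.injective (Laurent k) _)

/-- The extension of a twisted swap to the field of fractions. -/
def fractionTwistedSwap (u v : kˣ) : FractionRing (Laurent k) ≃ₐ[k] FractionRing (Laurent k) :=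
  IsFractionRing.algEquivOfAlgEquiv (twistedSwap u v)

@[simp]
theorem fractionTwistedSwap_x (u v : kˣ) :
    fractionTwistedSwap u v (toFraction k (x k)) = (u : k) • (toFraction k (y k)).val := by
  change IsFractionRing.algEquivOfAlgEquiv (twistedSwap u v) (algebraMap _ _ (x k).val) =
    (u : k) • algebraMap _ _ (y k).val
  rw [IsFractionRing.algEquivOfAlgEquiv_algebraMap, twistedSwap_x]
  exact map_smul (IsScalarTower.toAlgHom k (Laurent k) (FractionRing (Laurent k))) _ _

@[simp]
theorem fractionTwistedSwap_y (u v : kˣ) :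
    fractionTwistedSwap u v (toFraction k (y k)) = (v : k) • (toFraction k (x k)).val := by
  change IsFractionRing.algEquivOfAlgEquiv (twistedSwap u v) (algebraMap _ _ (y k).val) =
    (v : k) • algebraMap _ _ (x k).val
  rw [IsFractionRing.algEquivOfAlgEquiv_algebraMap, twistedSwap_y]
  exact map_smul (IsScalarTower.toAlgHom k (Laurent k) (FractionRing (Laurent k))) _ _

theorem fractionTwistedSwap_one_sq (f : FractionRing (Laurent k)) :
    fractionTwistedSwap 1 1 (fractionTwistedSwap 1 1 f) = f := by
  have comp_eq : (fractionTwistedSwap (1 : kˣ) 1).toAlgHom.comp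
      (fractionTwistedSwap (1 : kˣ) 1).toAlgHom = AlgHom.id k _ :=
    fraction_algHom_ext (by simp) (by simp)
  exact DFunLike.congr_fun comp_eq f

theorem fractionTwistedSwap_sq_comm (u v : kˣ) (f : FractionRing (Laurent k)) :
    fractionTwistedSwap u v (fractionTwistedSwap u v (fractionTwistedSwap 1 1 f)) =
      fractionTwistedSwap 1 1 (fractionTwistedSwap u v (fractionTwistedSwap u v f)) := by
  have comp_eq : ((fractionTwistedSwap u v).toAlgHom.comp (fractionTwistedSwap u v).toAlgHom).comp
      (fractionTwistedSwap 1 1).toAlgHom = (fractionTwistedSwap 1 1).toAlgHom.comp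
      ((fractionTwistedSwap u v).toAlgHom.comp (fractionTwistedSwap u v).toAlgHom) :=
    fraction_algHom_ext (by simp [smul_comm (u : k) (v : k)]) (by simp [smul_comm (u : k) (v : k)])
  exact DFunLike.congr_fun comp_eq f

end Laurent

end LaurentField

open Laurent in
theorem exists_isDoubleAffineHecke {k : Type u} [CommRing k] [IsDomain k] (c : k) (p : kˣ) :
    ∃ (A : Type u) (_ : Ring A) (_ : Algebra k A) (τ π x y : Aˣ),
      IsDoubleAffineHecke c p τ π x y ∧
        LinearIndependent k fun i => (pbwMonomial τ π x y i).val := by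
  have x_ne_y : toFraction k (x k) ≠ toFraction k (y k) := by
    intro h
    have := linearIndependent_toFraction (k := k)
    simpa [h] using this.injective.ne (show ((1, 0) : ℤ × ℤ) ≠ (0, 1) by simp)
  have sub_ne : (toFraction k (x k) - toFraction k (y k) : FractionRing (Laurent k)) ≠ 0 :=
    sub_ne_zero.2 (Units.val_injective.ne x_ne_y)
  have demazure := isDemazureSystem_rightDemazure (p := p) (σ := fractionTwistedSwap 1 1)
    (ρ := fractionTwistedSwap 1 p⁻¹) (x := toFraction k (x k)) (y := toFraction k (y k))
    fractionTwistedSwap_one_sq (by simp) (by simp) (by simp)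
    (fractionTwistedSwap_sq_comm 1 p⁻¹) (div_mul_cancel₀ _ sub_ne)
  refine (isVacuum_evalOne _ _ _).exists_isDoubleAffineHecke demazure ?_ c
  simp only [evalOne_rightMul_zpow_mul_zpow]
  exact linearIndependent_toFraction

section Presentation

variable {k A : Type*} [Ring A]

theorem mul_sub_eq_zero_iff_quadratic [Field k] [Algebra k A] {t : k} (ht : t ≠ 0) {a : A} :
    (a + algebraMap k A t⁻¹) * (a - algebraMap k A t) = 0 ↔ a * a = 1 + (t - t⁻¹) • a := by
  have expand : (a + algebraMap k A t⁻¹) * (a - algebraMap k A t) =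
      a * a - (1 + (t - t⁻¹) • a) := by
    simp only [Algebra.algebraMap_eq_smul_one, add_mul, mul_sub, smul_mul_assoc, one_mul,
      mul_smul_comm, mul_one]
    linear_combination (norm := module) -congrArg (· • (1 : A)) (mul_inv_cancel₀ ht)
  rw [expand, sub_eq_zero]

variable [CommRing k] [Algebra k A] {c : k} {τ π x y : Aˣ}

theorem inv_mem_of_quadratic {B : Subalgebra k A} (h : (τ * τ : A) = 1 + c • (τ : A))
    (hτ : (τ : A) ∈ B) : (↑τ⁻¹ : A) ∈ B := by
  rw [val_inv_of_quadratic h]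
  exact sub_mem hτ (B.smul_mem B.one_mem c)

theorem laurentGenerators_subset_adjoin (h : (τ * τ : A) = 1 + c • (τ : A)) :
    laurentGenerators (π * τ⁻¹) (τ * π) ⊆
      Algebra.adjoin k {(τ : A), (π : A), (↑π⁻¹ : A)} := by
  have mem_adjoin {a : A} (ha : a ∈ ({(τ : A), (π : A), (↑π⁻¹ : A)} : Set A)) :
      a ∈ Algebra.adjoin k {(τ : A), (π : A), (↑π⁻¹ : A)} := Algebra.subset_adjoin ha
  have tau_mem := mem_adjoin (a := τ) (by simp)
  have tau_inv_mem := inv_mem_of_quadratic h tau_mem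
  have pi_mem := mem_adjoin (a := π) (by simp)
  have pi_inv_mem := mem_adjoin (a := ↑π⁻¹) (by simp)
  rintro _ (rfl | rfl | rfl | rfl)
  · exact mul_mem pi_mem tau_inv_mem
  · simpa using! mul_mem tau_mem pi_inv_mem
  · exact mul_mem tau_mem pi_mem
  · simpa using! mul_mem pi_inv_mem tau_inv_mem

namespace IsAffineHecke

theorem commute_mul (h : IsAffineHecke c τ x y) : Commute (x * y) τ := by
  rw [commute_iff_eq]
  calc x * y * τ = y * (x * τ) := by rw [h.comm.eq, mul_assoc]
    _ = τ * (x * (τ * x * τ)) := by simp only [← h.braid, mul_assoc]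
    _ = τ * (x * y) := by rw [h.braid]

theorem semiconjBy_right_iff (h : IsAffineHecke c τ x y) :
    SemiconjBy π y x ↔ x⁻¹ * (π * τ⁻¹) = π * τ⁻¹ * x⁻¹ * τ⁻¹ * τ⁻¹ := by
  have rhs_eq : π * τ⁻¹ * x⁻¹ * τ⁻¹ * τ⁻¹ = π * y⁻¹ * τ⁻¹ := by rw [← h.braid]; group
  rw [rhs_eq, ← mul_assoc, mul_left_inj, inv_mul_eq_iff_eq_mul, ← mul_assoc,
    eq_mul_inv_iff_mul_eq]
  rfl

theorem semiconjBy_left_iff (h : IsAffineHecke c τ x y) (hπ : SemiconjBy π y x) {p : kˣ} :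
    SemiconjBy π x (p • y) ↔ τ * π * (x * y) = p • (x * y * (τ * π)) := by
  have lhs_eq : τ * π * (x * y) = τ * x * (π * x) := by
    rw [h.comm.eq, ← mul_assoc, mul_assoc τ, hπ.eq]
    simp only [mul_assoc]
  have rhs_eq : p • (x * y * (τ * π)) = τ * x * (p • y * π) := by
    rw [← mul_assoc, h.commute_mul.eq]
    exact Units.ext (by simp [Units.smul_def, mul_assoc])
  rw [lhs_eq, rhs_eq, mul_right_inj]
  rfl

end IsAffineHecke

end Presentation

theorem zp_units {M : Type*} [Monoid M] (u : Mˣ) (n : ℤ) : zp (u : M) ↑u⁻¹ n = ↑(u ^ n) := by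
  cases n with
  | ofNat n => simp [zp]
  | negSucc n => simp [zp, zpow_negSucc, ← inv_pow]

namespace DAHA

/-- The unit with value `g` and inverse `g'`, for mutually inverse generators `g` and `g'`. -/
@[simps]
def generatorUnit {g g' : DGen} (h : DRel q t (gD g * gD g') 1) (h' : DRel q t (gD g' * gD g) 1) :
    (DAHA q t)ˣ where
  val := RingQuot.mkAlgHom ℂ (DRel q t) (gD g)
  inv := RingQuot.mkAlgHom ℂ (DRel q t) (gD g')
  val_inv := by rw [← map_mul, RingQuot.mkAlgHom_rel ℂ h, map_one]
  inv_val := by rw [← map_mul, RingQuot.mkAlgHom_rel ℂ h', map_one]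

/-- The generator `T` as a unit. -/
def unitT : (DAHA q t)ˣ := generatorUnit q t .TTi .TiT

/-- The generator `X₁` as a unit. -/
def unitX1 : (DAHA q t)ˣ := generatorUnit q t .X1X1i .X1iX1

/-- The generator `X₂` as a unit. -/
def unitX2 : (DAHA q t)ˣ := generatorUnit q t .X2X2i .X2iX2

/-- The generator `Y₁` as a unit. -/
def unitY1 : (DAHA q t)ˣ := generatorUnit q t .Y1Y1i .Y1iY1

/-- The generator `Y₂` as a unit. -/
def unitY2 : (DAHA q t)ˣ := generatorUnit q t .Y2Y2i .Y2iY2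

/-- The element `π = Y₂ T`. -/
def unitPi : (DAHA q t)ˣ := unitY2 q t * unitT q t

theorem unitPi_mul_inv : unitPi q t * (unitT q t)⁻¹ = unitY2 q t :=
  mul_inv_cancel_right _ _

theorem unitT_mul_unitPi : unitT q t * unitPi q t = unitY1 q t := by
  have conj : (unitT q t)⁻¹ * unitY1 q t * (unitT q t)⁻¹ = unitY2 q t :=
    Units.ext (by simpa using! RingQuot.mkAlgHom_rel ℂ (DRel.TiY1Ti (q := q) (t := t)))
  rw [unitPi, ← conj]
  group

variable {q t}

theorem isAffineHecke (ht : t ≠ 0) :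
    IsAffineHecke (t - t⁻¹) (unitT q t) (unitX1 q t) (unitX2 q t) where
  quadratic := by
    have hecke := RingQuot.mkAlgHom_rel ℂ (DRel.hecke (q := q) (t := t))
    simp only [map_mul, map_add, map_sub, AlgHom.commutes, map_zero] at hecke
    exact (mul_sub_eq_zero_iff_quadratic ht).1 hecke
  braid := Units.ext (by simpa using! RingQuot.mkAlgHom_rel ℂ (DRel.TX1T (q := q) (t := t)))
  comm := Units.ext (by simpa using! RingQuot.mkAlgHom_rel ℂ (DRel.Xcomm (q := q) (t := t)))

theorem isDoubleAffineHecke (hq : q ≠ 0) (ht : t ≠ 0) :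
    IsDoubleAffineHecke (t - t⁻¹) (Units.mk0 q hq ^ 2) (unitT q t) (unitPi q t) (unitX1 q t)
      (unitX2 q t) := by
  have affine := isAffineHecke (q := q) ht
  have pi_mul_right : SemiconjBy (unitPi q t) (unitX2 q t) (unitX1 q t) := by
    rw [affine.semiconjBy_right_iff, unitPi_mul_inv]
    exact Units.ext (by simpa using! RingQuot.mkAlgHom_rel ℂ (DRel.X1iY2 (q := q) (t := t)))
  refine ⟨affine, pi_mul_right, ?_, ?_⟩
  · rw [affine.semiconjBy_left_iff pi_mul_right, unitT_mul_unitPi]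
    exact Units.ext (by simpa using! RingQuot.mkAlgHom_rel ℂ (DRel.YXX (q := q) (t := t)))
  · rw [← commute_mul_inv_iff, unitT_mul_unitPi, unitPi_mul_inv]
    exact Units.ext (by simpa using! RingQuot.mkAlgHom_rel ℂ (DRel.Ycomm (q := q) (t := t)))

/-- The images of the generators under the homomorphism determined by a quadruple of units. -/
def image {G : Type*} [Group G] (τ π x y : G) : DGen → G
  | .T => τ
  | .Ti => τ⁻¹
  | .X1 => x
  | .X1i => x⁻¹
  | .X2 => y
  | .X2i => y⁻¹
  | .Y1 => τ * π
  | .Y1i => (τ * π)⁻¹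
  | .Y2 => π * τ⁻¹
  | .Y2i => (π * τ⁻¹)⁻¹

variable {A : Type*} [Ring A] [Algebra ℂ A] {τ π x y : Aˣ}

theorem lift_image_eq_of_rel (hq : q ≠ 0) (ht : t ≠ 0)
    (h : IsDoubleAffineHecke (t - t⁻¹) (Units.mk0 q hq ^ 2) τ π x y) {a b : FD}
    (hab : DRel q t a b) :
    FreeAlgebra.lift ℂ (fun g => (image τ π x y g).val) a =
      FreeAlgebra.lift ℂ (fun g => (image τ π x y g).val) b := by
  have lift_gen (g : DGen) : FreeAlgebra.lift ℂ (fun g => (image τ π x y g).val) (gD g) =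
      (image τ π x y g).val := FreeAlgebra.lift_ι_apply _ _
  generalize FreeAlgebra.lift ℂ (fun g => (image τ π x y g).val) = φ at lift_gen ⊢
  cases hab with
  | TX1T => simp only [map_mul, lift_gen, ← Units.val_mul, image, h.braid]
  | TiY1Ti =>
    simp only [map_mul, lift_gen, ← Units.val_mul, image]
    group
  | Xcomm => simp only [map_mul, lift_gen, ← Units.val_mul, image, h.comm.eq]
  | Ycomm => simp only [map_mul, lift_gen, ← Units.val_mul, image, h.dual.comm.eq]
  | YXX =>
    have tau_pi_mul := congrArg Units.val
      ((h.toIsAffineHecke.semiconjBy_left_iff h.pi_mul_right).1 h.pi_mul_left)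
    simp only [map_mul, map_smul, lift_gen, ← Units.val_mul, image]
    exact tau_pi_mul
  | X1iY2 =>
    simp only [map_mul, lift_gen, ← Units.val_mul, image]
    rw [h.toIsAffineHecke.semiconjBy_right_iff.1 h.pi_mul_right]
  | hecke =>
    simp only [map_mul, map_add, map_sub, map_zero, AlgHom.commutes, lift_gen, image]
    exact (mul_sub_eq_zero_iff_quadratic ht).2 h.quadratic
  | _ => simp only [map_mul, map_one, lift_gen, image, Units.mul_inv, Units.inv_mul]

/-- The homomorphism out of the double affine Hecke algebra determined by a quadruple of units
satisfying its relations. -/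
def lift (hq : q ≠ 0) (ht : t ≠ 0)
    (h : IsDoubleAffineHecke (t - t⁻¹) (Units.mk0 q hq ^ 2) τ π x y) : DAHA q t →ₐ[ℂ] A :=
  RingQuot.liftAlgHom ℂ ⟨FreeAlgebra.lift ℂ fun g => (image τ π x y g).val,
    fun _ _ => lift_image_eq_of_rel hq ht h⟩

theorem lift_mkAlgHom_gD (hq : q ≠ 0) (ht : t ≠ 0)
    (h : IsDoubleAffineHecke (t - t⁻¹) (Units.mk0 q hq ^ 2) τ π x y) (g : DGen) :
    lift hq ht h (RingQuot.mkAlgHom ℂ (DRel q t) (gD g)) = (image τ π x y g).val := by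
  rw [lift, RingQuot.liftAlgHom_mkAlgHom_apply]
  exact FreeAlgebra.lift_ι_apply _ _

theorem lift_pbwMonomial (hq : q ≠ 0) (ht : t ≠ 0)
    (h : IsDoubleAffineHecke (t - t⁻¹) (Units.mk0 q hq ^ 2) τ π x y)
    (i : Fin 2 × ℤ × ℤ × ℤ × ℤ) :
    lift hq ht h (pbwMonomial (unitT q t) (unitPi q t) (unitX1 q t) (unitX2 q t) i).val =
      (pbwMonomial τ π x y i).val := by
  have map_T : Units.map (lift hq ht h : DAHA q t →* A) (unitT q t) = τ :=
    Units.ext (lift_mkAlgHom_gD hq ht h .T)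
  have map_Y2 : Units.map (lift hq ht h : DAHA q t →* A) (unitY2 q t) = π * τ⁻¹ :=
    Units.ext (lift_mkAlgHom_gD hq ht h .Y2)
  have map_X1 : Units.map (lift hq ht h : DAHA q t →* A) (unitX1 q t) = x :=
    Units.ext (lift_mkAlgHom_gD hq ht h .X1)
  have map_X2 : Units.map (lift hq ht h : DAHA q t →* A) (unitX2 q t) = y :=
    Units.ext (lift_mkAlgHom_gD hq ht h .X2)
  have map_pi : Units.map (lift hq ht h : DAHA q t →* A) (unitPi q t) = π := by
    rw [unitPi, map_mul, map_T, map_Y2, inv_mul_cancel_right]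
  have map_monomial : Units.map (lift hq ht h : DAHA q t →* A)
      (pbwMonomial (unitT q t) (unitPi q t) (unitX1 q t) (unitX2 q t) i) =
        pbwMonomial τ π x y i := by
    simp only [pbwMonomial, affineMonomial, map_mul, map_zpow, map_pow, map_inv, map_T, map_pi,
      map_X1, map_X2]
  exact congrArg Units.val map_monomial

theorem adjoin_range_generator :
    Algebra.adjoin ℂ (Set.range fun g => RingQuot.mkAlgHom ℂ (DRel q t) (gD g)) = ⊤ := by
  have range_eq : (Set.range fun g => RingQuot.mkAlgHom ℂ (DRel q t) (gD g)) =
      RingQuot.mkAlgHom ℂ (DRel q t) '' Set.range (FreeAlgebra.ι ℂ) := by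
    rw [← Set.range_comp]
    rfl
  rw [range_eq, ← AlgHom.map_adjoin, FreeAlgebra.adjoin_range_ι, Algebra.map_top,
    AlgHom.range_eq_top]
  exact RingQuot.mkAlgHom_surjective ℂ _

theorem adjoin_sup_laurentSubalgebra_eq_top (ht : t ≠ 0) :
    Algebra.adjoin ℂ {(unitT q t).val, (unitPi q t).val, (↑(unitPi q t)⁻¹ : DAHA q t)} ⊔
      laurentSubalgebra ℂ (unitX1 q t) (unitX2 q t) = ⊤ := by
  set B := Algebra.adjoin ℂ {(unitT q t).val, (unitPi q t).val, (↑(unitPi q t)⁻¹ : DAHA q t)}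
  set L := laurentSubalgebra ℂ (unitX1 q t) (unitX2 q t)
  have quadratic := (isAffineHecke (q := q) ht).quadratic
  have T_mem : (unitT q t).val ∈ B := Algebra.subset_adjoin (.inl rfl)
  have Y_mem {a : DAHA q t} (ha : a ∈ laurentGenerators (unitY2 q t) (unitY1 q t)) : a ∈ B := by
    rw [← unitPi_mul_inv, ← unitT_mul_unitPi] at ha
    exact laurentGenerators_subset_adjoin quadratic ha
  have X_mem {a : DAHA q t} (ha : a ∈ laurentGenerators (unitX1 q t) (unitX2 q t)) : a ∈ L :=
    mem_laurentSubalgebra ha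
  have B_le : B ≤ B ⊔ L := le_sup_left
  have L_le : L ≤ B ⊔ L := le_sup_right
  rw [eq_top_iff, ← adjoin_range_generator, Algebra.adjoin_le_iff]
  rintro _ ⟨g, rfl⟩
  cases g with
  | T => exact B_le T_mem
  | Ti => exact B_le (inv_mem_of_quadratic quadratic T_mem)
  | Y2 => exact B_le (Y_mem (.inl rfl))
  | Y2i => exact B_le (Y_mem (.inr (.inl rfl)))
  | Y1 => exact B_le (Y_mem (.inr (.inr (.inl rfl))))
  | Y1i => exact B_le (Y_mem (.inr (.inr (.inr rfl))))
  | X1 => exact L_le (X_mem (.inl rfl))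
  | X1i => exact L_le (X_mem (.inr (.inl rfl)))
  | X2 => exact L_le (X_mem (.inr (.inr (.inl rfl))))
  | X2i => exact L_le (X_mem (.inr (.inr (.inr rfl))))

theorem pbwDAHA_eq : pbwDAHA q t = fun i =>
    (pbwMonomial (unitT q t) (unitPi q t) (unitX1 q t) (unitX2 q t) i).val := by
  ext i
  simp only [pbwMonomial, affineMonomial, unitT_mul_unitPi, unitPi_mul_inv, Units.val_mul,
    ← zp_units, Units.val_pow_eq_pow_val]
  rfl

theorem linearIndependent_pbwDAHA (hq : q ≠ 0) (ht : t ≠ 0) :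
    LinearIndependent ℂ (pbwDAHA q t) := by
  obtain ⟨A, _, _, τ, π, x, y, h, lin⟩ :=
    exists_isDoubleAffineHecke (t - t⁻¹) (Units.mk0 q hq ^ 2)
  rw [pbwDAHA_eq]
  refine LinearIndependent.of_comp (lift hq ht h).toLinearMap ?_
  simp only [Function.comp_def, AlgHom.toLinearMap_apply, lift_pbwMonomial]
  exact lin

theorem span_pbwDAHA (hq : q ≠ 0) (ht : t ≠ 0) :
    Submodule.span ℂ (Set.range (pbwDAHA q t)) = ⊤ := by
  rw [pbwDAHA_eq, eq_top_iff, ← Algebra.top_toSubmodule,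
    ← adjoin_sup_laurentSubalgebra_eq_top ht]
  exact (isDoubleAffineHecke hq ht).adjoin_le_span_pbwMonomial

end DAHA

/-- The family of elements `T^ε Y₁^{a₁} Y₂^{a₂} X₁^{b₁} X₂^{b₂}`,
with `ε ∈ {0,1}` and `a₁, a₂, b₁, b₂ ∈ ℤ` (negative exponents interpreted via the
inverse generators), is a ℂ-vector-space basis of the double affine Hecke algebra
`H_{t,q}`. -/
theorem stmt1 (q t : ℂ) (hq : q ≠ 0) (ht : t ≠ 0) :
    LinearIndependent ℂ (pbwDAHA q t) ∧
      Submodule.span ℂ (Set.range (pbwDAHA q t)) = ⊤ :=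
  ⟨DAHA.linearIndependent_pbwDAHA hq ht, DAHA.span_pbwDAHA hq ht⟩
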